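/- Let (𝔭_j)_{j∈ℕ} be nonnegative reals with Σ_{j=0}^∞ 𝔭_j ≤ 1 and 𝔭₀ = 0, and let a_k := μ_k(0) be the occupation probabilities of 0 for the boundary random walk started at i₀ = 0. Then for every x ∈ (0,1), Σ_{k=0}^∞ a_k x^k ≤ 1/√(1 − x²). -/

import Mathlib

/-- The substochastic transition matrix of a boundary random walk on ℕ with
jumping measure `p` at the boundary state `0`. -/
noncomputable def Ptrans (p : ℕ → ℝ) : ℕ → ℕ → ℝ
  | 0, j => p j
  | i + 1, j => if j = i ∨ j = i + 2 then 1 / 2 else 0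

/-- The (substochastic) distribution at time `k` of the boundary random walk
with jumping measure `p` started at `i₀`. -/
noncomputable def occ (p : ℕ → ℝ) (i₀ : ℕ) : ℕ → ℕ → ℝ
  | 0 => fun j => if j = i₀ then 1 else 0
  | k + 1 => fun j => ∑' i : ℕ, occ p i₀ k i * Ptrans p i j

/-!
Let `r` be the probability generating function at `x` of the time a simple random walk needs to
go one step down. Then `x * (1 + r ^ 2) = 2 * r`, so `h i = r ^ i` satisfies `x • P h = h` at every
state `i ≥ 1`, while at `0` it loses `1 - x * F` with `F = ∑ p j * r ^ j`. Integrating `r ^ ·`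
against the law of the walk and telescoping in time gives
`(1 - x * F) * ∑ k < n, a k * x ^ k + x ^ n * ∑ j, μ n j * r ^ j = r ^ i₀`. Since `p 0 = 0` forces
`F ≤ r` and `x * r = 1 - √(1 - x ^ 2)`, dropping the last term on the left gives the bound.
-/

/-- The generating function `E[x ^ T]` of the time `T` at which a simple random walk on `ℤ` started
at `1` first hits `0`. It equals `(1 - √(1 - x ^ 2)) / x`; the form chosen here also has the right
value at `x = 0`. -/
noncomputable def firstPassageGF (x : ℝ) : ℝ := x / (1 + √(1 - x ^ 2))

section FirstPassage

variable {x : ℝ}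

lemma firstPassageGF_nonneg (hx : 0 ≤ x) : 0 ≤ firstPassageGF x := by
  unfold firstPassageGF
  positivity

lemma firstPassageGF_le_one (hx : x ≤ 1) : firstPassageGF x ≤ 1 := by
  have hs : 0 ≤ √(1 - x ^ 2) := Real.sqrt_nonneg _
  rw [firstPassageGF, div_le_one (by positivity)]
  linarith

lemma mul_firstPassageGF (hx : x ^ 2 ≤ 1) : x * firstPassageGF x = 1 - √(1 - x ^ 2) := by
  have hs : √(1 - x ^ 2) ^ 2 = 1 - x ^ 2 := Real.sq_sqrt (sub_nonneg.2 hx)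
  rw [firstPassageGF]
  field_simp
  linear_combination hs

lemma mul_one_add_firstPassageGF_sq (hx : x ^ 2 ≤ 1) :
    x * (1 + firstPassageGF x ^ 2) = 2 * firstPassageGF x := by
  have hs : √(1 - x ^ 2) ^ 2 = 1 - x ^ 2 := Real.sq_sqrt (sub_nonneg.2 hx)
  rw [firstPassageGF]
  field_simp
  linear_combination x * hs

end FirstPassage

section JumpGF

variable {p : ℕ → ℝ} {r : ℝ}

lemma mul_pow_le_mul_of_zero_eq_zero (hp : ∀ j, 0 ≤ p j) (hp00 : p 0 = 0)
    (hr0 : 0 ≤ r) (hr1 : r ≤ 1) (j : ℕ) : p j * r ^ j ≤ p j * r := by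
  rcases eq_or_ne j 0 with rfl | hj
  · simp [hp00]
  · exact mul_le_mul_of_nonneg_left (pow_le_of_le_one hr0 hr1 hj) (hp j)

lemma summable_mul_pow_of_le_one (hp : ∀ j, 0 ≤ p j) (hpsum : Summable p)
    (hr0 : 0 ≤ r) (hr1 : r ≤ 1) : Summable fun j => p j * r ^ j :=
  hpsum.of_nonneg_of_le (fun j => mul_nonneg (hp j) (pow_nonneg hr0 j))
    fun j => mul_le_of_le_one_right (hp j) (pow_le_one₀ hr0 hr1)

lemma tsum_mul_pow_le_tsum_mul (hp : ∀ j, 0 ≤ p j) (hpsum : Summable p) (hp00 : p 0 = 0)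
    (hr0 : 0 ≤ r) (hr1 : r ≤ 1) : ∑' j, p j * r ^ j ≤ (∑' j, p j) * r :=
  ((summable_mul_pow_of_le_one hp hpsum hr0 hr1).tsum_le_tsum
    (mul_pow_le_mul_of_zero_eq_zero hp hp00 hr0 hr1) (hpsum.mul_right r)).trans_eq tsum_mul_right

end JumpGF

section Walk

variable {p : ℕ → ℝ} {i₀ k : ℕ} {x r F M : ℝ}

lemma Ptrans_nonneg (hp : ∀ j, 0 ≤ p j) (i j : ℕ) : 0 ≤ Ptrans p i j := by
  cases i with
  | zero => exact hp j
  | succ i => simp only [Ptrans]; positivity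

lemma occ_nonneg (hp : ∀ j, 0 ≤ p j) (k j : ℕ) : 0 ≤ occ p i₀ k j := by
  induction k generalizing j with
  | zero => simp only [occ]; positivity
  | succ k ih => exact tsum_nonneg fun i => mul_nonneg (ih i) (Ptrans_nonneg hp i j)

lemma hasSum_Ptrans_succ_mul (p h : ℕ → ℝ) (i : ℕ) :
    HasSum (fun j => Ptrans p (i + 1) j * h j) ((h i + h (i + 2)) / 2) := by
  have hsupp : ∀ j ∉ ({i, i + 2} : Finset ℕ), Ptrans p (i + 1) j * h j = 0 := fun j hj => by
    rw [Finset.mem_insert, Finset.mem_singleton] at hj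
    simp only [Ptrans, if_neg hj, zero_mul]
  have hsum : ∑ j ∈ {i, i + 2}, Ptrans p (i + 1) j * h j = (h i + h (i + 2)) / 2 := by
    rw [Finset.sum_pair (by omega)]
    simp only [Ptrans, true_or, or_true, if_true]
    ring
  exact hsum ▸ hasSum_sum_of_ne_finset_zero hsupp

lemma hasSum_Ptrans_mul_pow (hx : x ≠ 0) (hr : x * (1 + r ^ 2) = 2 * r)
    (hF : HasSum (fun j => p j * r ^ j) F) (i : ℕ) :
    HasSum (fun j => Ptrans p i j * r ^ j) ((r ^ i - if i = 0 then 1 - x * F else 0) / x) := by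
  cases i with
  | zero => simpa [Ptrans, hx] using hF
  | succ i =>
    convert hasSum_Ptrans_succ_mul p (r ^ ·) i using 1
    rw [if_neg i.succ_ne_zero]
    field_simp
    linear_combination -r ^ i * hr

-- Tonelli: the law of the next step tested on `h` is the current law tested on `P h`.
lemma hasSum_occ_succ_mul (hp : ∀ j, 0 ≤ p j) {h Ph : ℕ → ℝ} (hh : ∀ j, 0 ≤ h j)
    (hPh : ∀ i, HasSum (fun j => Ptrans p i j * h j) (Ph i))
    (hM : HasSum (fun i => occ p i₀ k i * Ph i) M) :
    HasSum (fun j => occ p i₀ (k + 1) j * h j) M := by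
  let u : ℕ × ℕ → ℝ := fun ij => occ p i₀ k ij.1 * (Ptrans p ij.1 ij.2 * h ij.2)
  have hrow (i : ℕ) : HasSum (fun j => u (i, j)) (occ p i₀ k i * Ph i) := (hPh i).mul_left _
  have hu_nonneg : 0 ≤ u := fun ij =>
    mul_nonneg (occ_nonneg hp k ij.1) (mul_nonneg (Ptrans_nonneg hp ij.1 ij.2) (hh ij.2))
  have hu : Summable u := (summable_prod_of_nonneg hu_nonneg).2
    ⟨fun i => (hrow i).summable, by simpa only [(hrow _).tsum_eq] using hM.summable⟩
  have hu_sum : HasSum u M := (hu.hasSum.prod_fiberwise hrow).unique hM ▸ hu.hasSum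
  have hcol (j : ℕ) : HasSum (fun i => u (i, j)) (occ p i₀ (k + 1) j * h j) := by
    have htsum : ∑' i, u (i, j) = occ p i₀ (k + 1) j * h j := by
      simp only [u, occ, ← mul_assoc, tsum_mul_right]
    exact htsum ▸ (hu.prod_symm.prod_factor j).hasSum
  exact ((Equiv.prodComm ℕ ℕ).hasSum_iff.2 hu_sum).prod_fiberwise hcol

lemma hasSum_occ_succ_mul_pow (hp : ∀ j, 0 ≤ p j) (hx : x ≠ 0) (hr0 : 0 ≤ r)
    (hr : x * (1 + r ^ 2) = 2 * r) (hF : HasSum (fun j => p j * r ^ j) F)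
    (hM : HasSum (fun j => occ p i₀ k j * r ^ j) M) :
    HasSum (fun j => occ p i₀ (k + 1) j * r ^ j) ((M - (1 - x * F) * occ p i₀ k 0) / x) := by
  refine hasSum_occ_succ_mul hp (pow_nonneg hr0) (hasSum_Ptrans_mul_pow hx hr hF) ?_
  have hterm (i : ℕ) : occ p i₀ k i * ((r ^ i - if i = 0 then 1 - x * F else 0) / x) =
      (occ p i₀ k i * r ^ i - if i = 0 then (1 - x * F) * occ p i₀ k 0 else 0) / x := by
    split_ifs with hi
    · subst hi
      ring
    · ring
  simpa only [hterm] using (hM.sub (hasSum_ite_eq 0 ((1 - x * F) * occ p i₀ k 0))).div_const x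

lemma hasSum_occ_mul_pow (hp : ∀ j, 0 ≤ p j) (hx : x ≠ 0) (hr0 : 0 ≤ r)
    (hr : x * (1 + r ^ 2) = 2 * r) (hF : HasSum (fun j => p j * r ^ j) F) (n : ℕ) :
    HasSum (fun j => occ p i₀ n j * r ^ j)
      ((r ^ i₀ - (1 - x * F) * ∑ k ∈ Finset.range n, occ p i₀ k 0 * x ^ k) / x ^ n) := by
  induction n with
  | zero =>
    convert hasSum_ite_eq i₀ (r ^ i₀) using 2 with j
    · by_cases hj : j = i₀ <;> simp [occ, hj]
    · simp
  | succ n ih =>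
    convert hasSum_occ_succ_mul_pow hp hx hr0 hr hF ih using 1
    rw [Finset.sum_range_succ]
    field_simp
    ring

lemma mul_sum_range_occ_zero_mul_pow_le (hp : ∀ j, 0 ≤ p j) (hx : 0 < x) (hr0 : 0 ≤ r)
    (hr : x * (1 + r ^ 2) = 2 * r) (hF : HasSum (fun j => p j * r ^ j) F) (n : ℕ) :
    (1 - x * F) * ∑ k ∈ Finset.range n, occ p i₀ k 0 * x ^ k ≤ r ^ i₀ := by
  have hM := (hasSum_occ_mul_pow (i₀ := i₀) hp hx.ne' hr0 hr hF n).nonneg fun j =>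
    mul_nonneg (occ_nonneg hp n j) (pow_nonneg hr0 j)
  rwa [le_div_iff₀ (pow_pos hx n), zero_mul, sub_nonneg] at hM

lemma sum_range_occ_zero_mul_pow_le (hp : ∀ j, 0 ≤ p j) (hpsum : Summable p)
    (hp1 : ∑' j, p j ≤ 1) (hp00 : p 0 = 0) (hx : x ∈ Set.Ioo (0 : ℝ) 1) (n : ℕ) :
    ∑ k ∈ Finset.range n, occ p i₀ k 0 * x ^ k ≤ firstPassageGF x ^ i₀ / √(1 - x ^ 2) := by
  obtain ⟨hx0, hx1⟩ := hx
  have hxsq : x ^ 2 < 1 := by nlinarith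
  set r := firstPassageGF x
  have hr0 : 0 ≤ r := firstPassageGF_nonneg hx0.le
  have hr1 : r ≤ 1 := firstPassageGF_le_one hx1.le
  have hF := (summable_mul_pow_of_le_one hp hpsum hr0 hr1).hasSum
  have hF_le : ∑' j, p j * r ^ j ≤ r :=
    (tsum_mul_pow_le_tsum_mul hp hpsum hp00 hr0 hr1).trans (mul_le_of_le_one_left hr0 hp1)
  have hsqrt_le : √(1 - x ^ 2) ≤ 1 - x * ∑' j, p j * r ^ j := by
    linarith [mul_le_mul_of_nonneg_left hF_le hx0.le, mul_firstPassageGF hxsq.le]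
  have hsum_nonneg : 0 ≤ ∑ k ∈ Finset.range n, occ p i₀ k 0 * x ^ k :=
    Finset.sum_nonneg fun k _ => mul_nonneg (occ_nonneg hp k 0) (pow_nonneg hx0.le k)
  rw [le_div_iff₀' (Real.sqrt_pos.2 (sub_pos.2 hxsq))]
  exact (mul_le_mul_of_nonneg_right hsqrt_le hsum_nonneg).trans
    (mul_sum_range_occ_zero_mul_pow_le hp hx0 hr0 (mul_one_add_firstPassageGF_sq hxsq.le)
      hF n)

end Walk

theorem stmt15_general (p : ℕ → ℝ) (hp0 : ∀ j, 0 ≤ p j) (hpsum : Summable p)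
    (hp1 : ∑' j : ℕ, p j ≤ 1) (hp00 : p 0 = 0) (i₀ : ℕ)
    (x : ℝ) (hx : x ∈ Set.Ioo (0 : ℝ) 1) :
    Summable (fun k : ℕ => occ p i₀ k 0 * x ^ k) ∧
      ∑' k : ℕ, occ p i₀ k 0 * x ^ k ≤ firstPassageGF x ^ i₀ / √(1 - x ^ 2) := by
  have hnonneg (k : ℕ) : 0 ≤ occ p i₀ k 0 * x ^ k :=
    mul_nonneg (occ_nonneg hp0 k 0) (pow_nonneg hx.1.le k)
  have hbound := sum_range_occ_zero_mul_pow_le (i₀ := i₀) hp0 hpsum hp1 hp00 hx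
  exact ⟨summable_of_sum_range_le hnonneg hbound, Real.tsum_le_of_sum_range_le hnonneg hbound⟩

/-- If `𝔭₀ = 0`, then the generating function of the occupation probabilities of `0`
for the boundary random walk started at `0` satisfies `∑ₖ aₖ xᵏ ≤ 1/√(1 - x²)` for
`x ∈ (0,1)`. -/
theorem stmt15 (p : ℕ → ℝ) (hp0 : ∀ j, 0 ≤ p j) (hpsum : Summable p)
    (hp1 : ∑' j : ℕ, p j ≤ 1) (hp00 : p 0 = 0)
    (x : ℝ) (hx : x ∈ Set.Ioo (0 : ℝ) 1) :
    Summable (fun k : ℕ => occ p 0 k 0 * x ^ k) ∧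
      ∑' k : ℕ, occ p 0 k 0 * x ^ k ≤ 1 / Real.sqrt (1 - x ^ 2) := by
  simpa only [pow_zero] using stmt15_general p hp0 hpsum hp1 hp00 0 x hx
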